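/- arXiv:2006.05511 — 2 statements merged into one kernel-verified Lean document; each statement's English description precedes it below -/
import Mathlib

section
/- For every integer k ≥ 0, with n = 2^{k+3}, there exist two trees T and T' of order n that are incomparable with respect to ⪯: neither T ⪯ T' nor T' ⪯ T holds. -/
/-!
The graph star `G ↦ corona G` doubles the order, sends trees to trees and satisfies
`I(corona G, x) = (1 + x)^n · I(G, x / (1 + x))`. As `x ↦ x / (1 + x)` is an increasing bijection
of `(-1, ∞)` onto `(-∞, 1)` fixing `0`, with inverse `x ↦ x / (1 - x)`, it carries a failure of
`⪯` between two graphs of equal order over to their graph stars. Starting from one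
incomparable pair of trees on `8` vertices and taking graph stars `k` times gives the theorem.

The starting pair has independence polynomials `1 + 8x + 21x² + 24x³ + 16x⁴ + 6x⁵ + x⁶` and
`1 + 8x + 21x² + 23x³ + 9x⁴`. The first is the smaller one at `-1/10` and the larger one at `-1/5`,
and both are positive on `[-1/5, ∞)` while having a root in `[-1/4, 0]`.

The failure of `⪯` is carried through the induction as the predicate `Fails`, which speaks of
values and roots of the polynomials instead of `xi` (`Fails.not_pre`, `Fails.corona`). Trees are
handled in `isTree_corona`, the polynomial of a graph star in `eval_indepPoly_corona`.
-/

open Polynomial SimpleGraph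

/-- A finset of vertices is independent: pairwise nonadjacent. -/
def IsIndepFinset {V : Type*} (G : SimpleGraph V) (s : Finset V) : Prop :=
  ∀ u ∈ s, ∀ v ∈ s, ¬ G.Adj u v

open Classical in
/-- The independence polynomial of a finite graph, with real coefficients. -/
noncomputable def indepPoly {V : Type*} [Fintype V] (G : SimpleGraph V) : Polynomial ℝ :=
  ∑ s : Finset V, if IsIndepFinset G s then (X : Polynomial ℝ) ^ s.card else 0

/-- `xi G` : the largest real root of the independence polynomial of `G`. -/
noncomputable def xi {V : Type*} [Fintype V] (G : SimpleGraph V) : ℝ :=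
  sSup {x : ℝ | (indepPoly G).eval x = 0}

/-- `Pre H G` (`H ⪯ G`) : `I(H,x) ≥ I(G,x)` for all `x ∈ [ξ(G), 0]`. -/
def Pre {V W : Type*} [Fintype V] [Fintype W] (H : SimpleGraph W) (G : SimpleGraph V) : Prop :=
  ∀ x ∈ Set.Icc (xi G) 0, (indepPoly G).eval x ≤ (indepPoly H).eval x

/-- `SPre H G` (`H ≺ G`). -/
def SPre {V W : Type*} [Fintype V] [Fintype W] (H : SimpleGraph W) (G : SimpleGraph V) : Prop :=
  Pre H G ∧ indepPoly H ≠ indepPoly G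

open Classical in
/-- A graph is well-covered if all maximal independent sets have the same size. -/
def WellCovered {V : Type*} (G : SimpleGraph V) : Prop :=
  ∀ s t : Finset V,
    IsIndepFinset G s → (∀ v ∉ s, ¬ IsIndepFinset G (insert v s)) →
    IsIndepFinset G t → (∀ v ∉ t, ¬ IsIndepFinset G (insert v t)) →
    s.card = t.card

/-- A connected unicyclic graph: connected with as many edges as vertices. -/
def Unicyclic {V : Type*} [Fintype V] (G : SimpleGraph V) : Prop :=
  G.Connected ∧ G.edgeSet.ncard = Fintype.card V

/-- The graph star (corona with `K₁`) of `G`: each vertex `inl v` gets a pendant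
vertex `inr v`. -/
def corona {V : Type*} (G : SimpleGraph V) : SimpleGraph (V ⊕ V) :=
  SimpleGraph.fromRel (fun a b =>
    match a, b with
    | Sum.inl u, Sum.inl v => G.Adj u v
    | Sum.inl u, Sum.inr v => u = v
    | _, _ => False)

/-- `Ugraph n` (`U_n`, `n ≥ 3`): a triangle `0,1,2` with `n - 3` pendant vertices attached
to vertex `0`. -/
def Ugraph (n : ℕ) : SimpleGraph (Fin n) :=
  SimpleGraph.fromRel (fun i j => i.val = 0 ∨ (i.val = 1 ∧ j.val = 2))

/-- `Dgraph n` (`D_n`, `n ≥ 4`): a path `0,1,...,n-1` plus the chord `{0,2}`, i.e. a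
triangle with a path on `n - 3` vertices attached. -/
def Dgraph (n : ℕ) : SimpleGraph (Fin n) :=
  SimpleGraph.fromRel (fun i j => j.val = i.val + 1 ∨ (i.val = 0 ∧ j.val = 2))

/-- `starGraph n` (`S_n = K_{1,n-1}`): vertex `0` adjacent to all other vertices. -/
def starGraph (n : ℕ) : SimpleGraph (Fin n) :=
  SimpleGraph.fromRel (fun i _ => i.val = 0)

/-- `Mgraph n` (`M_n`, odd `n ≥ 5`): a triangle `0,1,2` with `(n-3)/2` paths of length two
attached at vertex `0`; the middle vertices are the odd indices `3,5,...,n-2` and the leaf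
attached to middle vertex `i` is `i + 1`. -/
def Mgraph (n : ℕ) : SimpleGraph (Fin n) :=
  SimpleGraph.fromRel (fun i j =>
    (i.val = 0 ∧ (j.val ≤ 2 ∨ j.val % 2 = 1)) ∨ (i.val = 1 ∧ j.val = 2) ∨
    (i.val % 2 = 1 ∧ 3 ≤ i.val ∧ j.val = i.val + 1))

/-- `SPgraph g k ℓ` (`G(g,k,ℓ)`, for `g ∈ {3,5}` and `k + ℓ ≥ 1`): a cycle on the vertices
`0,...,g-1`, a copy of `P_k*` on the vertices `g,...,g+2k-1` (path vertices at even offsets,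
each followed by its pendant vertex) joined to the cycle vertex `0` by an edge to the
path end `g`, and a copy of `P_ℓ*` on the vertices `g+2k,...,g+2k+2ℓ-1` joined to the cycle
vertex `2` by an edge to the path end `g+2k`. -/
def SPgraph (g k ℓ : ℕ) : SimpleGraph (Fin (g + 2*k + 2*ℓ)) :=
  SimpleGraph.fromRel (fun i j =>
    (i.val < g ∧ j.val < g ∧ (j.val = i.val + 1 ∨ (i.val = 0 ∧ j.val = g - 1))) ∨
    (i.val = 0 ∧ 0 < k ∧ j.val = g) ∨
    (g ≤ i.val ∧ i.val < g + 2*k ∧ (i.val - g) % 2 = 0 ∧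
      (j.val = i.val + 1 ∨ (j.val = i.val + 2 ∧ j.val < g + 2*k))) ∨
    (i.val = 2 ∧ 0 < ℓ ∧ j.val = g + 2*k) ∨
    (g + 2*k ≤ i.val ∧ (i.val - (g + 2*k)) % 2 = 0 ∧
      (j.val = i.val + 1 ∨ j.val = i.val + 2)))

/-- `Gtree n` (`G_{2n}`, `n ≥ 5`): the tree on `2n` vertices with path `v_1 … v_n` at
indices `0,…,n-1`, `z_1` at index `n`, `y_1, y_2` at `n+1, n+2`, `x_1, x_2` at `n+3, n+4`
(with `v_3 z_1`, `v_3 y_1`, `y_1 y_2`, `v_5 x_1`, `x_1 x_2` edges), and pendant vertices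
`w_j` at index `n + j - 1` attached to `v_j` for `6 ≤ j ≤ n`. -/
def Gtree (n : ℕ) : SimpleGraph (Fin (2*n)) :=
  SimpleGraph.fromRel (fun a b =>
    (a.val + 1 = b.val ∧ b.val < n) ∨
    (a.val = 2 ∧ (b.val = n ∨ b.val = n + 1)) ∨
    (a.val = n + 1 ∧ b.val = n + 2) ∨
    (a.val = 4 ∧ b.val = n + 3) ∨
    (a.val = n + 3 ∧ b.val = n + 4) ∨
    (5 ≤ a.val ∧ a.val < n ∧ b.val = n + a.val))

/-! ### Independence polynomials -/

open Classical in
lemma eval_indepPoly {V : Type*} [Fintype V] (G : SimpleGraph V) (x : ℝ) :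
    (indepPoly G).eval x = ∑ s : Finset V, if IsIndepFinset G s then x ^ s.card else 0 := by
  rw [indepPoly, eval_finsetSum]
  refine Finset.sum_congr rfl fun s _ => ?_
  split_ifs <;> simp

lemma indepPoly_congr {V W : Type*} [Fintype V] [Fintype W] {G : SimpleGraph V}
    {H : SimpleGraph W} (e : G ≃g H) : indepPoly G = indepPoly H := by
  unfold indepPoly
  refine Fintype.sum_equiv (Equiv.finsetCongr e.toEquiv) _ _ fun s => ?_
  have h : IsIndepFinset H (Equiv.finsetCongr e.toEquiv s) ↔ IsIndepFinset G s := by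
    simp only [IsIndepFinset, Equiv.finsetCongr_apply, Finset.forall_mem_map]
    exact forall₄_congr fun u _ v _ => not_congr e.map_adj_iff
  have hc : (Equiv.finsetCongr e.toEquiv s).card = s.card := by simp
  rw [hc]
  split_ifs <;> tauto

@[simp]
lemma corona_adj_inl_inl {V : Type*} (G : SimpleGraph V) (u v : V) :
    (corona G).Adj (Sum.inl u) (Sum.inl v) ↔ G.Adj u v := by
  simp only [corona, fromRel_adj, ne_eq, Sum.inl.injEq]
  constructor
  · rintro ⟨-, h | h⟩
    exacts [h, h.symm]
  · exact fun h => ⟨h.ne, Or.inl h⟩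

@[simp]
lemma corona_adj_inl_inr {V : Type*} (G : SimpleGraph V) (u v : V) :
    (corona G).Adj (Sum.inl u) (Sum.inr v) ↔ u = v := by
  simp [corona]

@[simp]
lemma corona_adj_inr_inl {V : Type*} (G : SimpleGraph V) (u v : V) :
    (corona G).Adj (Sum.inr u) (Sum.inl v) ↔ v = u := by
  simp [corona]

@[simp]
lemma corona_adj_inr_inr {V : Type*} (G : SimpleGraph V) (u v : V) :
    ¬ (corona G).Adj (Sum.inr u) (Sum.inr v) := by
  simp [corona]

/-- An independent set of the graph star is an independent set `A` of `G` together with any set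
of pendant vertices whose supports avoid `A`. -/
lemma isIndepFinset_corona {V : Type*} (G : SimpleGraph V) (A B : Finset V) :
    IsIndepFinset (corona G) (A.disjSum B) ↔ IsIndepFinset G A ∧ Disjoint A B := by
  simp only [IsIndepFinset, Finset.disjoint_left]
  constructor
  · intro h
    refine ⟨fun u hu v hv => ?_, fun u hu hv => ?_⟩
    · simpa using h (Sum.inl u) (by simpa) (Sum.inl v) (by simpa)
    · simpa using h (Sum.inl u) (by simpa) (Sum.inr u) (by simpa)
  · rintro ⟨h1, h2⟩ (u | u) hu (v | v) hv
    · simpa using h1 u (by simpa using hu) v (by simpa using hv)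
    · simp only [Finset.inl_mem_disjSum, Finset.inr_mem_disjSum] at hu hv
      simp only [corona_adj_inl_inr]
      rintro rfl
      exact h2 hu hv
    · simp only [Finset.inl_mem_disjSum, Finset.inr_mem_disjSum] at hu hv
      simp only [corona_adj_inr_inl]
      rintro rfl
      exact h2 hv hu
    · simp

lemma eval_indepPoly_corona {V : Type*} [Fintype V] (G : SimpleGraph V) {x : ℝ}
    (hx : 1 + x ≠ 0) :
    (indepPoly (corona G)).eval x =
      (1 + x) ^ Fintype.card V * (indepPoly G).eval (x / (1 + x)) := by
  classical
  rw [eval_indepPoly, eval_indepPoly, Finset.mul_sum,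
    ← Equiv.sum_comp (Finset.sumEquiv (α := V) (β := V)).symm.toEquiv, Fintype.sum_prod_type]
  refine Finset.sum_congr rfl fun A _ => ?_
  have key : ∀ B : Finset V,
      (if IsIndepFinset (corona G) ((Finset.sumEquiv (α := V) (β := V)).symm.toEquiv (A, B))
        then x ^ ((Finset.sumEquiv (α := V) (β := V)).symm.toEquiv (A, B)).card else 0)
      = if IsIndepFinset G A then
          x ^ A.card * (if B ∈ (Aᶜ).powerset then x ^ B.card else 0) else 0 := by
    intro B
    change (if IsIndepFinset (corona G) (A.disjSum B) then x ^ (A.disjSum B).card else 0) = _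
    rw [isIndepFinset_corona, Finset.card_disjSum, pow_add]
    have hm : B ∈ Aᶜ.powerset ↔ Disjoint A B := by
      rw [Finset.mem_powerset, Finset.subset_compl_iff_disjoint_right, disjoint_comm]
    by_cases h1 : IsIndepFinset G A <;> by_cases h2 : Disjoint A B <;>
      simp only [hm, h1, h2, and_true, and_false, if_true, if_false, mul_zero]
  rw [Finset.sum_congr rfl fun B _ => key B]
  by_cases h1 : IsIndepFinset G A
  · simp only [h1, if_true]
    rw [← Finset.mul_sum, ← Finset.sum_filter]
    have hp := Finset.sum_pow_mul_eq_add_pow x 1 Aᶜ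
    simp only [one_pow, mul_one] at hp
    rw [Finset.filter_univ_mem, hp, ← Finset.card_add_card_compl A, pow_add, div_pow]
    field_simp
    ring
  · simp [h1]

/-! ### Failure of comparability -/

/-- A witness that `G ⪯ H` fails: `I(G, ·)` is below `I(H, ·)` at a point of `(-1, 0]` to the
right of which `I(H, ·)` has no roots. The last conjunct, a root of `I(H, ·)` above `-1`,
makes `xi H` the supremum of a nonempty set. -/
def Fails {V W : Type*} [Fintype V] [Fintype W] (G : SimpleGraph V) (H : SimpleGraph W) : Prop :=
  ∃ x : ℝ, -1 < x ∧ x ≤ 0 ∧ (indepPoly G).eval x < (indepPoly H).eval x ∧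
    (∀ y, x < y → (indepPoly H).eval y ≠ 0) ∧ ∃ r, -1 < r ∧ (indepPoly H).eval r = 0

lemma Fails.not_pre {V W : Type*} [Fintype V] [Fintype W] {G : SimpleGraph V}
    {H : SimpleGraph W} (h : Fails G H) : ¬ Pre G H := by
  obtain ⟨x, -, hx0, hlt, hroot, r, -, hr⟩ := h
  intro hpre
  refine (hpre x ⟨csSup_le ⟨r, hr⟩ fun y hy => ?_, hx0⟩).not_gt hlt
  by_contra! hxy
  exact hroot y hxy hy

lemma Fails.congr {V W V' W' : Type*} [Fintype V] [Fintype W] [Fintype V'] [Fintype W']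
    {G : SimpleGraph V} {H : SimpleGraph W} {G' : SimpleGraph V'} {H' : SimpleGraph W'}
    (h : Fails G H) (e : G ≃g G') (f : H ≃g H') : Fails G' H' := by
  unfold Fails at *
  rwa [← indepPoly_congr e, ← indepPoly_congr f]

lemma Fails.corona {V : Type*} [Fintype V] {G H : SimpleGraph V}
    (h : Fails G H) : Fails (corona G) (corona H) := by
  obtain ⟨x, hx1, hx0, hlt, hroot, r, hr1, hr⟩ := h
  -- The inverse substitution: `z = t / (1 - t)` has `z / (1 + z) = t` and `1 + z = 1 / (1 - t)`.
  have inv : ∀ t : ℝ, t < 1 → 1 + t / (1 - t) = (1 - t)⁻¹ ∧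
      t / (1 - t) / (1 + t / (1 - t)) = t := by
    intro t ht
    have h0 : 1 - t ≠ 0 := by linarith
    have h1 : 1 + t / (1 - t) = (1 - t)⁻¹ := by field_simp; ring
    refine ⟨h1, ?_⟩
    rw [h1]
    field_simp
  have gt : ∀ t : ℝ, t < 1 → -1 < t / (1 - t) := by
    intro t ht
    have h1 := (inv t ht).1
    have h2 : 0 < (1 - t)⁻¹ := inv_pos.mpr (by linarith)
    linarith
  have hrx : r ≤ x := by
    by_contra! hc
    exact hroot r hc hr
  have hx' := gt x (by linarith)
  have hr' := gt r (by linarith)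
  refine ⟨x / (1 - x), hx', div_nonpos_of_nonpos_of_nonneg hx0 (by linarith), ?_, ?_,
    r / (1 - r), hr', ?_⟩
  · rw [eval_indepPoly_corona G (by linarith), eval_indepPoly_corona H (by linarith),
      (inv x (by linarith)).2]
    exact mul_lt_mul_of_pos_left hlt (pow_pos (by linarith) _)
  · intro y hy
    have hy1 : 0 < 1 + y := by linarith
    rw [eval_indepPoly_corona H hy1.ne']
    refine mul_ne_zero (pow_pos hy1 _).ne' (hroot _ ?_)
    rw [div_lt_iff₀ (by linarith)] at hy
    rw [lt_div_iff₀ hy1]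
    linarith
  · rw [eval_indepPoly_corona H (by linarith), (inv r (by linarith)).2, hr, mul_zero]

/-! ### Trees -/

/-- The graph star of a tree is a tree: it is connected, and the `n` pendant edges are its only
edges besides the at most `n - 1` inherited ones. -/
lemma isTree_corona {V : Type*} [Finite V] {G : SimpleGraph V} (h : G.IsTree) :
    (corona G).IsTree := by
  have := Fintype.ofFinite V
  obtain ⟨hc, hcard⟩ := isTree_iff_connected_and_card.mp h
  have hconn : (corona G).Connected := by
    obtain ⟨v0⟩ := hc.nonempty
    have hl : ∀ v, (corona G).Reachable (Sum.inl v0) (Sum.inl v) := fun v =>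
      (hc.preconnected v0 v).map
        (⟨Sum.inl, fun {a b} hab => (corona_adj_inl_inl G a b).mpr hab⟩ : G →g corona G)
    refine connected_iff_exists_forall_reachable _ |>.mpr ⟨Sum.inl v0, ?_⟩
    rintro (v | v)
    · exact hl v
    · exact (hl v).trans (Adj.reachable (by simp))
  refine isTree_iff_connected_and_card.mpr ⟨hconn, ?_⟩
  refine le_antisymm ?_ hconn.card_vert_le_card_edgeSet_add_one
  have hsub : (corona G).edgeSet ⊆
      Sym2.map Sum.inl '' G.edgeSet ∪ Set.range fun v : V => s(Sum.inl v, Sum.inr v) := by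
    intro e
    induction e with
    | _ a b =>
      rw [mem_edgeSet]
      rcases a with a | a <;> rcases b with b | b <;> intro hab
      · exact Or.inl ⟨s(a, b), by simpa using hab, by simp⟩
      · obtain rfl : a = b := by simpa using hab
        exact Or.inr ⟨a, rfl⟩
      · obtain rfl : b = a := by simpa using hab
        exact Or.inr ⟨b, Sym2.eq_swap⟩
      · simp at hab
  have h1 := Set.ncard_le_ncard hsub (Set.toFinite _)
  have h2 := Set.ncard_union_le (Sym2.map (Sum.inl : V → V ⊕ V) '' G.edgeSet)
    (Set.range fun v : V => (s(Sum.inl v, Sum.inr v) : Sym2 (V ⊕ V)))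
  have h3 := Set.ncard_image_le (f := Sym2.map (Sum.inl : V → V ⊕ V)) (Set.toFinite G.edgeSet)
  have h4 : (Set.range fun v : V => (s(Sum.inl v, Sum.inr v) : Sym2 (V ⊕ V))).ncard ≤
      Nat.card V := by
    rw [← Set.image_univ, ← Set.ncard_univ]
    exact Set.ncard_image_le
  rw [Nat.card_sum]
  rw [Nat.card_coe_set_eq] at *
  omega

/-- The graph on `Fin 8` joining each vertex other than `0` to its parent. -/
def parentGraph (p : Fin 8 → Fin 8) : SimpleGraph (Fin 8) :=
  SimpleGraph.fromRel fun i j => i ≠ 0 ∧ p i = j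

instance (p : Fin 8 → Fin 8) : DecidableRel (parentGraph p).Adj :=
  fun i j => inferInstanceAs (Decidable (i ≠ j ∧ ((i ≠ 0 ∧ p i = j) ∨ (j ≠ 0 ∧ p j = i))))

instance (p : Fin 8 → Fin 8) (s : Finset (Fin 8)) : Decidable (IsIndepFinset (parentGraph p) s) :=
  inferInstanceAs (Decidable (∀ u ∈ s, ∀ v ∈ s, ¬ (parentGraph p).Adj u v))

lemma isTree_parentGraph (p : Fin 8 → Fin 8) (hp : ∀ i, i ≠ 0 → p i < i) :
    (parentGraph p).IsTree := by
  have hr : ∀ i, (parentGraph p).Reachable 0 i := by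
    intro i
    induction i using WellFoundedLT.induction with
    | _ i ih =>
      by_cases hi : i = 0
      · rw [hi]
      · exact (ih _ (hp i hi)).trans (Adj.reachable ⟨(hp i hi).ne, Or.inr ⟨hi, rfl⟩⟩)
  have hconn : (parentGraph p).Connected :=
    connected_iff_exists_forall_reachable _ |>.mpr ⟨0, hr⟩
  refine isTree_iff_connected_and_card.mpr ⟨hconn, ?_⟩
  refine le_antisymm ?_ hconn.card_vert_le_card_edgeSet_add_one
  have hsub : (parentGraph p).edgeSet ⊆ (fun i => s(i, p i)) '' {i : Fin 8 | i ≠ 0} := by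
    intro e
    induction e with
    | _ a b =>
      rw [mem_edgeSet]
      rintro ⟨-, ⟨h0, h⟩ | ⟨h0, h⟩⟩
      · exact ⟨a, h0, by simp [h]⟩
      · exact ⟨b, h0, by simp [h]⟩
  have h1 := Set.ncard_le_ncard hsub (Set.toFinite _)
  have h2 := Set.ncard_image_le (f := fun i => s(i, p i)) (Set.toFinite {i : Fin 8 | i ≠ 0})
  have h3 : {i : Fin 8 | i ≠ 0}.ncard = 7 := by
    rw [Set.ncard_eq_toFinset_card']
    decide
  rw [Nat.card_coe_set_eq, Nat.card_eq_fintype_card, Fintype.card_fin]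
  omega

/-! ### The pair of order eight -/

/-- Parents in the tree obtained from the star `K_{1,4}` with centre `0` by joining its leaf
`1` to a new vertex `5` that carries two leaves. -/
def parentA : Fin 8 → Fin 8 := ![0, 0, 0, 0, 0, 1, 5, 5]

/-- Parents in the spider with centre `0`, one leg of length one and three of length two. -/
def parentB : Fin 8 → Fin 8 := ![0, 0, 0, 0, 0, 1, 2, 3]

lemma eval_parentGraph (p : Fin 8 → Fin 8) (x : ℝ) :
    (indepPoly (parentGraph p)).eval x = ∑ j ∈ Finset.range 9,
      ((Finset.univ.filter fun s : Finset (Fin 8) =>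
        IsIndepFinset (parentGraph p) s ∧ s.card = j).card : ℝ) * x ^ j := by
  have hfilter : (indepPoly (parentGraph p)).eval x =
      ∑ s ∈ Finset.univ.filter (IsIndepFinset (parentGraph p)), x ^ s.card := by
    rw [eval_indepPoly, Finset.sum_filter]
    congr!
  rw [hfilter, ← Finset.sum_fiberwise_of_maps_to (g := Finset.card) (t := Finset.range 9)]
  · refine Finset.sum_congr rfl fun j _ => ?_
    rw [Finset.filter_filter, Finset.sum_congr rfl (g := fun _ => x ^ j), Finset.sum_const,
      nsmul_eq_mul]
    intro s hs
    rw [(Finset.mem_filter.mp hs).2.2]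
  · intro s _
    have := Finset.card_le_univ s
    simp only [Fintype.card_fin] at this
    exact Finset.mem_range.mpr (by omega)

lemma eval_A (x : ℝ) : (indepPoly (parentGraph parentA)).eval x =
    1 + 8 * x + 21 * x ^ 2 + 24 * x ^ 3 + 16 * x ^ 4 + 6 * x ^ 5 + x ^ 6 := by
  have h : ∀ j ∈ Finset.range 9, (Finset.univ.filter fun s : Finset (Fin 8) =>
      IsIndepFinset (parentGraph parentA) s ∧ s.card = j).card =
        [1, 8, 21, 24, 16, 6, 1, 0, 0].getD j 0 := by
    decide +kernel
  rw [eval_parentGraph, Finset.sum_congr rfl fun j hj => by rw [h j hj]]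
  simp [Finset.sum_range_succ]

lemma eval_B (x : ℝ) : (indepPoly (parentGraph parentB)).eval x =
    1 + 8 * x + 21 * x ^ 2 + 23 * x ^ 3 + 9 * x ^ 4 := by
  have h : ∀ j ∈ Finset.range 9, (Finset.univ.filter fun s : Finset (Fin 8) =>
      IsIndepFinset (parentGraph parentB) s ∧ s.card = j).card =
        [1, 8, 21, 23, 9, 0, 0, 0, 0].getD j 0 := by
    decide +kernel
  rw [eval_parentGraph, Finset.sum_congr rfl fun j hj => by rw [h j hj]]
  simp [Finset.sum_range_succ]

lemma exists_root {V : Type*} [Fintype V] (G : SimpleGraph V)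
    (h : (indepPoly G).eval (-1 / 4) ≤ 0) (h0 : 0 ≤ (indepPoly G).eval 0) :
    ∃ r, -1 < r ∧ (indepPoly G).eval r = 0 := by
  obtain ⟨r, hr, hr0⟩ := intermediate_value_Icc (a := (-1 / 4 : ℝ)) (b := 0) (by norm_num)
    (indepPoly G).continuous.continuousOn ⟨h, h0⟩
  exact ⟨r, by linarith [hr.1], hr0⟩

lemma fails_AB : Fails (parentGraph parentA) (parentGraph parentB) := by
  refine ⟨-1 / 10, by norm_num, by norm_num, ?_, fun y hy => ?_, exists_root _ ?_ ?_⟩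
  · rw [eval_A, eval_B]; norm_num
  -- Expanding around `-1/10` makes all coefficients positive.
  · obtain ⟨t, ht, rfl⟩ : ∃ t : ℝ, 0 < t ∧ y = t - 1 / 10 := ⟨y + 1 / 10, by linarith, by ring⟩
    rw [eval_B]
    ring_nf
    positivity
  · rw [eval_B]; norm_num
  · rw [eval_B]; norm_num

lemma fails_BA : Fails (parentGraph parentB) (parentGraph parentA) := by
  refine ⟨-1 / 5, by norm_num, by norm_num, ?_, fun y hy => ?_, exists_root _ ?_ ?_⟩
  · rw [eval_A, eval_B]; norm_num
  -- Expanding around `-1/5` makes all coefficients positive.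
  · obtain ⟨t, ht, rfl⟩ : ∃ t : ℝ, 0 < t ∧ y = t - 1 / 5 := ⟨y + 1 / 5, by linarith, by ring⟩
    rw [eval_A]
    ring_nf
    positivity
  · rw [eval_A]; norm_num
  · rw [eval_A]; norm_num

lemma exists_fails (k : ℕ) :
    ∃ T T' : SimpleGraph (Fin (2 ^ (k + 3))),
      T.IsTree ∧ T'.IsTree ∧ Fails T T' ∧ Fails T' T := by
  induction k with
  | zero =>
    exact ⟨parentGraph parentA, parentGraph parentB, isTree_parentGraph _ (by decide),
      isTree_parentGraph _ (by decide), fails_AB, fails_BA⟩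
  | succ k ih =>
    obtain ⟨T, T', hT, hT', h1, h2⟩ := ih
    let e : Fin (2 ^ (k + 1 + 3)) ≃ Fin (2 ^ (k + 3)) ⊕ Fin (2 ^ (k + 3)) :=
      (finCongr (by ring)).trans finSumFinEquiv.symm
    let f := SimpleGraph.Iso.comap e (corona T)
    let f' := SimpleGraph.Iso.comap e (corona T')
    exact ⟨_, _, f.isTree_iff.mpr (isTree_corona hT), f'.isTree_iff.mpr (isTree_corona hT'),
      h1.corona.congr f.symm f'.symm, h2.corona.congr f'.symm f.symm⟩

/-- For every `k ≥ 0`, with `n = 2^(k+3)`, there exist two trees of order `n`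
that are incomparable with respect to `⪯`. -/
theorem stmt17 (k : ℕ) :
    ∃ (T T' : SimpleGraph (Fin (2 ^ (k + 3)))),
      T.IsTree ∧ T'.IsTree ∧ ¬ Pre T T' ∧ ¬ Pre T' T := by
  obtain ⟨T, T', hT, hT', h1, h2⟩ := exists_fails k
  exact ⟨T, T', hT, hT', h1.not_pre, h2.not_pre⟩
end

section
/- If G is a connected bipartite graph of order n ≥ 1, then P_n ⪯ G and G ⪯ K_{⌈n/2⌉,⌊n/2⌋}. -/
/-!
The proof works with `ind G S x`, the independence polynomial of the subgraph induced by the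
vertex set `S`, evaluated at `x`. If `I(G, ·) > 0` on `[x, 0]`, then at every point of that
interval *all* the values `ind G S` are positive (`ind_pos_of_univ`): at the last point where one
of them fails to be positive the recursion `I(S + v) = I(S) + x I(S - N(v))` makes `ind G`
antitone in `S`, so `I(G)` would fail to be positive too. By continuity it suffices to compare
polynomials at the points `x > ξ(G)`, where this applies (`pre_of_pos`).

*Lower bound.* Let `p_n` be the value of `I(P_n)`. For a connected graph `S` of order `n` and a
vertex `u` one has `I(S) / I(S - u) ≤ p_n / p_{n-1}` (`ratio`). Indeed
`I(S) / I(S - u) = 1 + x I(S - N[u]) / I(S - u)`, and the last quotient factors over the components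
of `S - u`, each of which meets `N(u)`. Induction bounds each factor, and the resulting product is
handled by `(p_a / p_{a-1}) (p_b / p_{b-1}) ≤ p_{a+b} / p_{a+b-1}`, which holds as long as
`p_{a+b+1} ≥ 0` (`pv_ratio_mul`). Growing a connected set one vertex at a time then gives
`I(G) ≤ p_n` (`grow`); positivity of `p_k` is carried along by the intermediate value theorem, since
at a zero of `p_k` the ratio bound would contradict positivity of `I(S)`.

*Upper bound.* A bipartite graph with parts of sizes `a, b` is a spanning subgraph of `K_{a,b}`,
and deleting edges can only increase the polynomial where all `ind` are positive (`ind_sub`).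
Moreover `I(K_{a,b}, x) = t^a + t^b - 1` with `t = 1 + x`, which for `t ∈ [0, 1]` and fixed `a + b`
is smallest in the balanced case.
-/

open Polynomial SimpleGraph

/-! ### The independence polynomial of an induced subgraph -/

open Classical in
/-- The value at `x` of the independence polynomial of the subgraph of `G` induced by `S`. -/
noncomputable def ind {V : Type*} (G : SimpleGraph V) (S : Finset V) (x : ℝ) : ℝ :=
  ∑ s ∈ S.powerset, if IsIndepFinset G s then x ^ s.card else 0

lemma eval_indepPoly_s18 {V : Type*} [Fintype V] (G : SimpleGraph V) (x : ℝ) :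
    (indepPoly G).eval x = ind G Finset.univ x := by
  classical
  unfold indepPoly ind
  rw [Polynomial.eval_finsetSum, Finset.powerset_univ]
  refine Finset.sum_congr rfl fun s _ => ?_
  split_ifs <;> simp

lemma ind_empty {V : Type*} (G : SimpleGraph V) (x : ℝ) : ind G ∅ x = 1 := by
  simp [ind, IsIndepFinset]

lemma ind_zero {V : Type*} (G : SimpleGraph V) (S : Finset V) : ind G S 0 = 1 := by
  classical
  unfold ind
  rw [Finset.sum_eq_single ∅]
  · simp [IsIndepFinset]
  · intro s _ hs
    simp [hs]
  · simp

lemma ind_continuous {V : Type*} (G : SimpleGraph V) (S : Finset V) :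
    Continuous (ind G S) := by
  classical
  unfold ind
  refine continuous_finsetSum _ fun s _ => ?_
  split_ifs <;> fun_prop

/-- The deletion recursion `I(S + v) = I(S) + x I(S - N(v))`. -/
lemma ind_insert {V : Type*} [DecidableEq V] (G : SimpleGraph V) [DecidableRel G.Adj]
    (S : Finset V) (v : V) (hv : v ∉ S) (x : ℝ) :
    ind G (insert v S) x = ind G S x + x * ind G (S.filter fun w => ¬ G.Adj v w) x := by
  unfold ind
  rw [Finset.sum_powerset_insert hv]
  congr 1
  rw [Finset.mul_sum]
  symm
  rw [← Finset.sum_subset (Finset.powerset_mono.2 (Finset.filter_subset (fun w => ¬ G.Adj v w) S))]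
  · refine Finset.sum_congr rfl fun s hs => ?_
    rw [Finset.mem_powerset] at hs
    have hvs : v ∉ s := fun h => hv (Finset.mem_filter.1 (hs h)).1
    have key : IsIndepFinset G (insert v s) ↔ IsIndepFinset G s := by
      constructor
      · intro h a ha b hb
        exact h a (Finset.mem_insert_of_mem ha) b (Finset.mem_insert_of_mem hb)
      · intro h a ha b hb
        rcases Finset.mem_insert.1 ha with rfl | ha' <;>
          rcases Finset.mem_insert.1 hb with rfl | hb'
        · exact G.irrefl
        · exact (Finset.mem_filter.1 (hs hb')).2
        · exact fun hh => (Finset.mem_filter.1 (hs ha')).2 hh.symm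
        · exact h a ha' b hb'
    by_cases hs' : IsIndepFinset G s
    · rw [if_pos hs', if_pos (key.2 hs'), Finset.card_insert_of_notMem hvs, pow_succ']
    · rw [if_neg hs', if_neg (mt key.1 hs'), mul_zero]
  · intro s hs hs'
    rw [Finset.mem_powerset] at hs hs'
    rw [if_neg]
    intro h
    apply hs'
    intro w hw
    exact Finset.mem_filter.2 ⟨hs hw, h v (Finset.mem_insert_self _ _) w
      (Finset.mem_insert_of_mem hw)⟩

open Classical in
lemma ind_union {V : Type*} (G : SimpleGraph V) (x : ℝ) (k : ℕ) :
    ∀ C D : Finset V, D.card ≤ k → Disjoint C D → (∀ c ∈ C, ∀ d ∈ D, ¬ G.Adj c d) →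
      ind G (C ∪ D) x = ind G C x * ind G D x := by
  induction k with
  | zero =>
    intro C D hk _ _
    have : D = ∅ := Finset.card_eq_zero.1 (by omega)
    subst this
    simp [ind_empty]
  | succ k ih =>
    intro C D hk hdis hcd
    rcases D.eq_empty_or_nonempty with rfl | ⟨v, hv⟩
    · simp [ind_empty]
    obtain ⟨D', hvD, rfl⟩ : ∃ D', v ∉ D' ∧ insert v D' = D :=
      ⟨D.erase v, Finset.notMem_erase v D, Finset.insert_erase hv⟩
    rw [Finset.card_insert_of_notMem hvD] at hk
    rw [Finset.disjoint_insert_right] at hdis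
    have hvC : v ∉ C ∪ D' := by simp [hdis.1, hvD]
    have hf : (C ∪ D').filter (fun w => ¬ G.Adj v w) = C ∪ D'.filter (fun w => ¬ G.Adj v w) := by
      rw [Finset.filter_union, Finset.filter_true_of_mem]
      exact fun c hc h => hcd c hc v (Finset.mem_insert_self _ _) h.symm
    rw [Finset.union_insert, ind_insert G _ v hvC, ind_insert G _ v hvD, hf,
      ih C D' (by omega) hdis.2 fun c hc d hd => hcd c hc d (Finset.mem_insert_of_mem hd),
      ih C (D'.filter fun w => ¬ G.Adj v w) ((Finset.card_filter_le _ _).trans (by omega))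
        (hdis.2.mono_right (Finset.filter_subset _ _))
        fun c hc d hd => hcd c hc d (Finset.mem_insert_of_mem (Finset.mem_filter.1 hd).1)]
    ring

/-- At a point `x ≤ 0` where all proper induced subgraphs have nonnegative polynomial, larger vertex
sets have smaller values. -/
lemma ind_anti {V : Type*} (G : SimpleGraph V) (x : ℝ) (hx : x ≤ 0) (S : Finset V) :
    ∀ T : Finset V, (∀ R ⊂ T, 0 ≤ ind G R x) → S ⊆ T → ind G T x ≤ ind G S x := by
  classical
  intro T
  induction T using Finset.strongInduction with
  | H T ih =>
    intro hpos hST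
    by_cases hEq : S = T
    · rw [hEq]
    obtain ⟨w, hwT, hwS⟩ := Finset.exists_of_ssubset (hST.ssubset_of_ne hEq)
    have hss := Finset.erase_ssubset hwT
    have h1 : ind G (T.erase w) x ≤ ind G S x :=
      ih _ hss (fun R hR => hpos R (hR.trans hss))
        fun a ha => Finset.mem_erase.2 ⟨fun h => hwS (h ▸ ha), hST ha⟩
    have h2 := ind_insert G (T.erase w) w (Finset.notMem_erase w T) x
    rw [Finset.insert_erase hwT] at h2
    have h3 := hpos _ ((Finset.filter_subset (fun a => ¬ G.Adj w a) (T.erase w)).trans_ssubset hss)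
    have h4 := mul_nonpos_of_nonpos_of_nonneg hx h3
    linarith

/-- If `I(G, ·)` is positive on `[x, 0]`, so is the polynomial of every induced subgraph. -/
lemma ind_pos_of_univ {V : Type*} [Fintype V] (G : SimpleGraph V) (x : ℝ)
    (h : ∀ y ∈ Set.Icc x 0, 0 < ind G Finset.univ y) :
    ∀ y ∈ Set.Icc x 0, ∀ S : Finset V, 0 < ind G S y := by
  by_contra hcon
  push Not at hcon
  obtain ⟨y, hy, S, hS⟩ := hcon
  -- the points of `[x, 0]` where some induced subgraph has nonpositive value
  set B : Set ℝ := Set.Icc x 0 ∩ ⋃ S : Finset V, {z | ind G S z ≤ 0} with hB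
  have hBc : IsCompact B := by
    refine isCompact_Icc.inter_right (isClosed_iUnion_of_finite fun S => ?_)
    exact isClosed_le (ind_continuous G S) continuous_const
  obtain ⟨z, hz⟩ := hBc.exists_isGreatest ⟨y, hy, Set.mem_iUnion.2 ⟨S, hS⟩⟩
  obtain ⟨⟨hzI, hzU⟩, hmax⟩ := hz
  obtain ⟨T, hT⟩ := Set.mem_iUnion.1 hzU
  have hT : ind G T z ≤ 0 := hT
  have hz0 : z < 0 := by
    refine lt_of_le_of_ne hzI.2 fun h0 => ?_
    rw [h0, ind_zero] at hT
    linarith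
  have hnn : ∀ R : Finset V, 0 ≤ ind G R z := by
    intro R
    have ht : Filter.Tendsto (ind G R) (nhdsWithin z (Set.Ioi z)) (nhds (ind G R z)) :=
      (ind_continuous G R).continuousAt.tendsto.mono_left nhdsWithin_le_nhds
    refine ge_of_tendsto ht ?_
    filter_upwards [Ioo_mem_nhdsGT hz0] with w hw
    by_contra hneg
    push Not at hneg
    have := hmax ⟨⟨hzI.1.trans hw.1.le, hw.2.le⟩, Set.mem_iUnion.2 ⟨R, hneg.le⟩⟩
    exact absurd hw.1 (not_lt.2 this)
  have h1 := ind_anti G z hz0.le T Finset.univ (fun R _ => hnn R) (Finset.subset_univ T)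
  have h2 := h z hzI
  linarith

/-- To prove `H ⪯ G`, it is enough to compare at the points `x ≤ 0` such that `I(G, ·)` is positive
on `[x, 0]`; the endpoint `ξ(G)` is reached by continuity. -/
lemma pre_of_pos {V W : Type*} [Fintype V] [Fintype W] (H : SimpleGraph W) (G : SimpleGraph V)
    (h : ∀ x ≤ 0, (∀ y ∈ Set.Icc x 0, 0 < ind G Finset.univ y) →
      ind G Finset.univ x ≤ ind H Finset.univ x) : Pre H G := by
  have hne : indepPoly G ≠ 0 := by
    intro h0
    have h1 := eval_indepPoly_s18 G 0
    rw [h0, ind_zero] at h1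
    simp at h1
  have hfin : {x : ℝ | (indepPoly G).eval x = 0}.Finite :=
    Polynomial.finite_setOfPred_isRoot hne
  have hlt : ∀ x ≤ 0, xi G < x → ind G Finset.univ x ≤ ind H Finset.univ x := by
    intro x hx hxi
    refine h x hx fun y hy => ?_
    by_contra hneg
    push Not at hneg
    -- an intermediate zero between `y` and `0` would exceed `ξ(G)`
    obtain ⟨z, hz, hz0⟩ := intermediate_value_Icc hy.2
      (ind_continuous G Finset.univ).continuousOn
      (show (0 : ℝ) ∈ Set.Icc _ _ from ⟨hneg, by rw [ind_zero]; norm_num⟩)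
    have hle : z ≤ xi G := le_csSup hfin.bddAbove (by
      show (indepPoly G).eval z = 0
      rw [eval_indepPoly_s18, hz0])
    linarith [hy.1, hz.1]
  intro x hx
  rw [eval_indepPoly_s18, eval_indepPoly_s18]
  rcases eq_or_lt_of_le hx.2 with rfl | hx0
  · rw [ind_zero, ind_zero]
  have htG : Filter.Tendsto (ind G Finset.univ) (nhdsWithin x (Set.Ioi x))
      (nhds (ind G Finset.univ x)) :=
    (ind_continuous G _).continuousAt.tendsto.mono_left nhdsWithin_le_nhds
  have htH : Filter.Tendsto (ind H Finset.univ) (nhdsWithin x (Set.Ioi x))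
      (nhds (ind H Finset.univ x)) :=
    (ind_continuous H _).continuousAt.tendsto.mono_left nhdsWithin_le_nhds
  refine le_of_tendsto_of_tendsto htG htH ?_
  filter_upwards [Ioo_mem_nhdsGT hx0] with w hw
  exact hlt w hw.2.le (hx.1.trans_lt hw.1)

/-! ### Paths -/

/-- The values at `x` of the independence polynomials of the paths `P_n`, through their
recursion. -/
noncomputable def pv (x : ℝ) : ℕ → ℝ
  | 0 => 1
  | 1 => 1 + x
  | n + 2 => pv x (n + 1) + x * pv x n

lemma pv_continuous (n : ℕ) : Continuous fun x => pv x n := by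
  induction n using Nat.strong_induction_on with
  | _ n ih =>
    match n with
    | 0 => simpa [pv] using continuous_const
    | 1 => simp only [pv]; fun_prop
    | n + 2 =>
      simp only [pv]
      exact (ih (n + 1) (by omega)).add (continuous_id.mul (ih n (by omega)))

lemma pv_at_zero (n : ℕ) : pv 0 n = 1 := by
  induction n using Nat.strong_induction_on with
  | _ n ih =>
    match n with
    | 0 => simp [pv]
    | 1 => simp [pv]
    | n + 2 => simp [pv, ih (n + 1) (by omega)]

/-- The recursion in a form valid for all `n`: by truncated subtraction `pv x (0 - 1)` is `1`, which
is the right value of `I(P_{-1})`. -/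
lemma pv_succ (x : ℝ) (n : ℕ) : pv x (n + 1) = pv x n + x * pv x (n - 1) := by
  cases n <;> simp [pv]

/-- Splitting the path `P_{a+b+3}` at its vertex number `a + 2`. -/
lemma pv_split (x : ℝ) (a b : ℕ) :
    pv x (a + b + 3) = pv x (a + 1) * pv x (b + 1) + x * (pv x a * pv x b) := by
  induction b using Nat.strong_induction_on with
  | _ b ih =>
    match b with
    | 0 => simp only [pv]; ring
    | 1 =>
      simp only [pv]
      ring
    | b + 2 =>
      have h1 := ih (b + 1) (by omega)
      have h2 := ih b (by omega)
      rw [show a + (b + 1) + 3 = a + b + 4 by ring] at h1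
      rw [show a + (b + 2) + 3 = a + b + 3 + 2 by ring, show b + 2 + 1 = (b + 1) + 2 by ring]
      rw [show pv x (a + b + 3 + 2) = pv x (a + b + 4) + x * pv x (a + b + 3) from rfl,
        show pv x (b + 1 + 2) = pv x (b + 2) + x * pv x (b + 1) from rfl,
        show pv x (b + 2) = pv x (b + 1) + x * pv x b from rfl, h1, h2,
        show pv x (b + 1 + 1) = pv x (b + 1) + x * pv x b from rfl]
      ring

lemma pv_mul_ge (x : ℝ) (hx : x ≤ 0) (a b : ℕ) (hpos : ∀ k ≤ a + b + 1, 0 < pv x k) :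
    pv x (a + b + 1) ≤ pv x a * pv x b := by
  match a, b with
  | 0, b =>
    have h := hpos (b - 1) (by omega)
    have := mul_nonpos_of_nonpos_of_nonneg hx h.le
    rw [Nat.zero_add, pv_succ]
    simp only [pv]
    linarith
  | a, 0 =>
    have h := hpos (a - 1) (by omega)
    have := mul_nonpos_of_nonpos_of_nonneg hx h.le
    rw [Nat.add_zero, pv_succ]
    simp only [pv]
    linarith
  | a + 1, b + 1 =>
    have h1 := hpos a (by omega)
    have h2 := hpos b (by omega)
    have := mul_nonpos_of_nonpos_of_nonneg hx (mul_pos h1 h2).le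
    rw [show a + 1 + (b + 1) + 1 = a + b + 3 by ring, pv_split]
    linarith

/-- The ratios `r_n = p_n / p_{n-1}` satisfy `r_{a+1} r_{b+1} ≤ r_{a+b+2}`, as long as
`p_{a+b+3} ≥ 0`. -/
lemma pv_ratio_mul (x : ℝ) (hx : x ≤ 0) (a b : ℕ) (hpos : ∀ k ≤ a + b + 2, 0 < pv x k)
    (hlast : 0 ≤ pv x (a + b + 3)) :
    pv x (a + 1) * pv x (b + 1) * pv x (a + b + 1) ≤
      pv x (a + b + 2) * (pv x a * pv x b) := by
  have h1 := pv_split x a b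
  have h2 : pv x (a + b + 3) = pv x (a + b + 2) + x * pv x (a + b + 1) := rfl
  have h3 := pv_mul_ge x hx a b fun k hk => hpos k (by omega)
  -- the difference of the two sides is `(p_a p_b - p_{a+b+1}) p_{a+b+3}`
  have h4 := mul_nonneg (sub_nonneg.2 h3) hlast
  have h5 : pv x (a + 1) * pv x (b + 1) =
      pv x (a + b + 2) + x * pv x (a + b + 1) - x * (pv x a * pv x b) := by linarith
  rw [h2] at h4
  rw [h5]
  linarith

lemma ind_path (n : ℕ) (x : ℝ) :
    ind (pathGraph n) Finset.univ x = pv x n := by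
  classical
  -- the first `m` vertices of the path
  have key : ∀ m ≤ n, ind (pathGraph n) (Finset.univ.filter fun i : Fin n => i.val < m) x
      = pv x m := by
    intro m
    induction m using Nat.strong_induction_on with
    | _ m ih =>
      intro hm
      match m with
      | 0 => simp [ind_empty, pv]
      | m + 1 =>
        have h1 : (Finset.univ.filter fun i : Fin n => i.val < m + 1) =
            insert (⟨m, by omega⟩ : Fin n) (Finset.univ.filter fun i : Fin n => i.val < m) := by
          ext i
          simp only [Finset.mem_filter, Finset.mem_univ, true_and, Finset.mem_insert, Fin.ext_iff]
          omega
        have h2 : (Finset.univ.filter fun i : Fin n => i.val < m).filter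
            (fun w => ¬ (pathGraph n).Adj (⟨m, by omega⟩ : Fin n) w) =
            Finset.univ.filter fun i : Fin n => i.val < m - 1 := by
          ext i
          simp only [Finset.mem_filter, Finset.mem_univ, true_and, pathGraph_adj]
          omega
        rw [h1, ind_insert _ _ _ (by simp), h2, ih m (by omega) (by omega),
          ih (m - 1) (by omega) (by omega), pv_succ]
  have h := key n le_rfl
  rwa [Finset.filter_true_of_mem (fun i _ => i.isLt)] at h

/-! ### The ratio bound for connected graphs -/

/-- `C` is a union of components of the subgraph of `G` induced by `S`: no edge leaves `C`
inside `S`. -/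
def ClosedIn {V : Type*} (G : SimpleGraph V) (S C : Finset V) : Prop :=
  C ⊆ S ∧ ∀ c ∈ C, ∀ d ∈ S, d ∉ C → ¬ G.Adj c d

/-- `U` meets every component of the subgraph of `G` induced by `S`. -/
def Hits {V : Type*} (G : SimpleGraph V) (S U : Finset V) : Prop :=
  ∀ C, ClosedIn G S C → C.Nonempty → ∃ u ∈ C, u ∈ U

/-- The subgraph of `G` induced by `S` has at most one component. -/
def Conn {V : Type*} (G : SimpleGraph V) (S : Finset V) : Prop :=
  ∀ C, ClosedIn G S C → C.Nonempty → C = S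

open Classical in
/-- The bound `I(S + u) / I(S) ≤ p_{n+1} / p_n`, for `n = |S|`, follows from a bound on
`I(S) / I(S - N(u))`. -/
lemma ratio_step {V : Type*} (G : SimpleGraph V) (x : ℝ) (hx : x ≤ 0) (S : Finset V) (u : V)
    (hu : u ∉ S) (h : ind G S x * pv x (S.card - 1) ≤
      pv x S.card * ind G (S.filter fun w => ¬ G.Adj u w) x) :
    ind G (insert u S) x * pv x S.card ≤ pv x (S.card + 1) * ind G S x := by
  rw [ind_insert G S u hu, pv_succ]
  have := mul_le_mul_of_nonpos_left h hx
  linarith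

open Classical in
/-- If `U` meets every component of `S`, then `I(S) / I(S - U) ≤ p_n / p_{n-1}` for `n = |S|`,
provided that `p_0, …, p_n` are positive and `p_{n+1}` is nonnegative. Truncated subtraction
agrees with the convention `p_{-1} = 1`. -/
lemma ratio {V : Type*} (G : SimpleGraph V) (x : ℝ) (hx : x ≤ 0)
    (hpos : ∀ S : Finset V, 0 < ind G S x) (S : Finset V) :
    ∀ U, Hits G S U → (∀ k ≤ S.card, 0 < pv x k) → 0 ≤ pv x (S.card + 1) →
      ind G S x * pv x (S.card - 1) ≤ pv x S.card * ind G (S \ U) x := by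
  induction S using Finset.strongInduction with
  | H S ih =>
    intro U hU hp hlast
    rcases S.eq_empty_or_nonempty with rfl | hne
    · simp [ind_empty, pv]
    by_cases hconn : Conn G S
    · obtain ⟨u, huS, huU⟩ := hU S ⟨Finset.Subset.refl S, fun c _ d hd hd' => absurd hd hd'⟩ hne
      have hss := Finset.erase_ssubset huS
      have hcard : (S.erase u).card + 1 = S.card := Finset.card_erase_add_one huS
      -- every component of `S - u` contains a neighbour of `u`
      have hits : Hits G (S.erase u) (S.filter fun w => G.Adj u w) := by
        intro C hC hCne
        by_contra hno
        push Not at hno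
        have hCS : C = S := by
          refine hconn C ⟨hC.1.trans hss.subset, fun c hc d hd hdC hadj => ?_⟩ hCne
          by_cases hdu : d = u
          · subst hdu
            exact hno c hc (Finset.mem_filter.2 ⟨hss.subset (hC.1 hc), hadj.symm⟩)
          · exact hC.2 c hc d (Finset.mem_erase.2 ⟨hdu, hd⟩) hdC hadj
        exact Finset.notMem_erase u S (hC.1 (hCS ▸ huS))
      have h1 := ih _ hss _ hits (fun k hk => hp k (by omega)) (hcard ▸ (hp S.card le_rfl).le)
      have hset : S.erase u \ (S.filter fun w => G.Adj u w) =
          (S.erase u).filter fun w => ¬ G.Adj u w := by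
        ext w
        simp only [Finset.mem_sdiff, Finset.mem_erase, Finset.mem_filter]
        tauto
      rw [hset] at h1
      have h2 := ratio_step G x hx _ u (Finset.notMem_erase u S) h1
      rw [Finset.insert_erase huS, hcard, show (S.erase u).card = S.card - 1 by omega] at h2
      have h3 : ind G (S.erase u) x ≤ ind G (S \ U) x :=
        ind_anti G x hx _ _ (fun R _ => (hpos R).le) fun w hw => by
          rw [Finset.mem_sdiff] at hw
          exact Finset.mem_erase.2 ⟨fun h => hw.2 (h ▸ huU), hw.1⟩
      exact h2.trans (mul_le_mul_of_nonneg_left h3 (hp _ le_rfl).le)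
    · -- `S` is the disjoint union of `C` and `D`, with no edges between them
      unfold Conn at hconn
      push Not at hconn
      obtain ⟨C, hC, hCne, hCS⟩ := hconn
      have hCss : C ⊂ S := hC.1.ssubset_of_ne hCS
      obtain ⟨D, hD⟩ : ∃ D, D = S \ C := ⟨_, rfl⟩
      have hmemD : ∀ w, w ∈ D ↔ w ∈ S ∧ w ∉ C := fun w => by rw [hD, Finset.mem_sdiff]
      have hDss : D ⊂ S := hD ▸ Finset.sdiff_ssubset hC.1 hCne
      have hDne : D.Nonempty := hD ▸ Finset.sdiff_nonempty.2 fun h =>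
        hCS (Finset.Subset.antisymm hC.1 h)
      have hunion : S = C ∪ D := by rw [hD, Finset.union_sdiff_of_subset hC.1]
      have hdis : Disjoint C D := hD ▸ Finset.disjoint_sdiff
      have hno : ∀ c ∈ C, ∀ d ∈ D, ¬ G.Adj c d := fun c hc d hd =>
        hC.2 c hc d ((hmemD d).1 hd).1 ((hmemD d).1 hd).2
      have hcard : S.card = C.card + D.card := by rw [hunion, Finset.card_union_of_disjoint hdis]
      have hCU : Hits G C U := fun E hE hEne => by
        refine hU E ⟨hE.1.trans hC.1, fun e he d hd hdE => ?_⟩ hEne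
        by_cases hdC : d ∈ C
        · exact hE.2 e he d hdC hdE
        · exact hC.2 e (hE.1 he) d hd hdC
      have hDU : Hits G D U := fun E hE hEne => by
        refine hU E ⟨hE.1.trans hDss.subset, fun e he d hd hdE => ?_⟩ hEne
        by_cases hdC : d ∈ C
        · exact fun hadj => hno d hdC e (hE.1 he) hadj.symm
        · exact hE.2 e he d ((hmemD d).2 ⟨hd, hdC⟩) hdE
      obtain ⟨a, ha⟩ : ∃ a, C.card = a + 1 :=
        ⟨C.card - 1, by have := Finset.card_pos.2 hCne; omega⟩
      obtain ⟨b, hb⟩ : ∃ b, D.card = b + 1 :=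
        ⟨D.card - 1, by have := Finset.card_pos.2 hDne; omega⟩
      have hS : S.card = a + b + 2 := by omega
      have h1 := ih C hCss U hCU (fun k hk => hp k (by omega)) (hp _ (by omega)).le
      have h2 := ih D hDss U hDU (fun k hk => hp k (by omega)) (hp _ (by omega)).le
      have e1 : ind G S x = ind G C x * ind G D x := by
        rw [hunion]
        exact ind_union G x _ C D le_rfl hdis hno
      have e2 : ind G (S \ U) x = ind G (C \ U) x * ind G (D \ U) x := by
        rw [hunion, Finset.union_sdiff_distrib]
        exact ind_union G x _ _ _ le_rfl
          (hdis.mono Finset.sdiff_subset Finset.sdiff_subset) fun c hc d hd =>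
            hno c (Finset.mem_sdiff.1 hc).1 d (Finset.mem_sdiff.1 hd).1
      rw [hS] at hp hlast
      rw [ha, Nat.add_sub_cancel] at h1
      rw [hb, Nat.add_sub_cancel] at h2
      rw [e1, e2, hS, show a + b + 2 - 1 = a + b + 1 by omega]
      have pa := hp a (by omega)
      have pb := hp b (by omega)
      have h3 := mul_le_mul h1 h2 (mul_pos (hpos D) pb).le
        (mul_pos (hp (a + 1) (by omega)) (hpos _)).le
      have h4 := pv_ratio_mul x hx a b hp hlast
      have h5 := mul_le_mul_of_nonneg_right h3 (hp (a + b + 1) (by omega)).le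
      have h6 := mul_le_mul_of_nonneg_right h4 (mul_pos (hpos (C \ U)) (hpos (D \ U))).le
      refine le_of_mul_le_mul_right ?_ (mul_pos pa pb)
      linarith

/-- A connected graph whose induced subgraphs have positive polynomials on `[x, 0]` contains
connected vertex sets `S` of every size `k ≤ |V|` with `I(S) ≤ I(P_k)` on `[x, 0]`. -/
lemma grow {V : Type*} [Fintype V] (G : SimpleGraph V) (hG : Conn G Finset.univ) (x : ℝ)
    (hpos : ∀ y ∈ Set.Icc x 0, ∀ S : Finset V, 0 < ind G S y) (k : ℕ) :
    k ≤ Fintype.card V → ∃ S : Finset V, S.card = k ∧ Conn G S ∧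
      ∀ y ∈ Set.Icc x 0, (∀ j ≤ k, 0 < pv y j) ∧ ind G S y ≤ pv y k := by
  classical
  induction k with
  | zero =>
    intro _
    refine ⟨∅, rfl, fun C hC hne => ?_, fun y _ => ⟨fun j hj => ?_, ?_⟩⟩
    · exact Finset.subset_empty.1 hC.1
    · obtain rfl : j = 0 := by omega
      simp [pv]
    · simp [ind_empty, pv]
  | succ k ih =>
    intro hk
    obtain ⟨S, hcard, hconn, hS⟩ := ih (by omega)
    -- a new vertex, adjacent to `S` unless `S` is empty
    obtain ⟨u, huS, hadj⟩ : ∃ u, u ∉ S ∧ (S.Nonempty → ∃ s ∈ S, G.Adj s u) := by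
      have hSu : S ≠ Finset.univ := fun h => by
        rw [h, Finset.card_univ] at hcard
        omega
      rcases S.eq_empty_or_nonempty with rfl | hne
      · obtain ⟨u⟩ : Nonempty V := Fintype.card_pos_iff.1 (by omega)
        exact ⟨u, by simp, fun h => absurd h (by simp)⟩
      · by_contra hno
        push Not at hno
        exact hSu (hG S ⟨Finset.subset_univ S, fun c hc d _ hd => (hno d hd).2 c hc⟩ hne)
    have hu : ∀ C, ClosedIn G (insert u S) C → C.Nonempty → u ∈ C := by
      intro C hC hne
      by_contra huC
      have hCS : C ⊆ S := fun c hc =>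
        (Finset.mem_insert.1 (hC.1 hc)).resolve_left fun h => huC (h ▸ hc)
      have hEq : C = S := hconn C
        ⟨hCS, fun c hc d hd hdC => hC.2 c hc d (Finset.mem_insert_of_mem hd) hdC⟩ hne
      obtain ⟨s, hs, hsu⟩ := hadj (hEq ▸ hne)
      exact hC.2 s (hEq ▸ hs) u (Finset.mem_insert_self _ _) huC hsu
    have hconn' : Conn G (insert u S) := by
      intro C hC hne
      by_contra hEq
      have hDne : (insert u S \ C).Nonempty := Finset.sdiff_nonempty.2 fun h =>
        hEq (Finset.Subset.antisymm hC.1 h)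
      have hD : ClosedIn G (insert u S) (insert u S \ C) := by
        refine ⟨Finset.sdiff_subset, fun c hc d hd hdD hadj' => ?_⟩
        rw [Finset.mem_sdiff] at hc hdD
        have hdC : d ∈ C := by
          by_contra h
          exact hdD ⟨hd, h⟩
        exact hC.2 d hdC c hc.1 hc.2 hadj'.symm
      exact (Finset.mem_sdiff.1 (hu _ hD hDne)).2 (hu C hC hne)
    have hits : Hits G S (S.filter fun w => G.Adj u w) := by
      intro C hC hne
      have hEq := hconn C hC hne
      obtain ⟨s, hs, hsu⟩ := hadj (hEq ▸ hne)
      exact ⟨s, hEq ▸ hs, Finset.mem_filter.2 ⟨hs, hsu.symm⟩⟩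
    have hset : S \ (S.filter fun w => G.Adj u w) = S.filter fun w => ¬ G.Adj u w := by
      ext w
      simp only [Finset.mem_sdiff, Finset.mem_filter]
      tauto
    have step : ∀ y ∈ Set.Icc x 0, 0 ≤ pv y (k + 1) →
        ind G (insert u S) y * pv y k ≤ pv y (k + 1) * ind G S y := by
      intro y hy hk0
      have h := ratio G y hy.2 (hpos y hy) S _ hits (by rw [hcard]; exact (hS y hy).1)
        (by rwa [hcard])
      rw [hset] at h
      have h' := ratio_step G y hy.2 S u huS h
      rwa [hcard] at h'
    have hnew : ∀ y ∈ Set.Icc x 0, 0 < pv y (k + 1) := by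
      intro y hy
      by_contra hneg
      push Not at hneg
      obtain ⟨z, hz, hz0⟩ := intermediate_value_Icc hy.2 (pv_continuous (k + 1)).continuousOn
        (show (0 : ℝ) ∈ Set.Icc _ _ from ⟨hneg, by simp [pv_at_zero]⟩)
      have hz0 : pv z (k + 1) = 0 := hz0
      have hzI : z ∈ Set.Icc x 0 := ⟨hy.1.trans hz.1, hz.2⟩
      have h1 := step z hzI hz0.ge
      have h2 := mul_pos (hpos z hzI (insert u S)) ((hS z hzI).1 k le_rfl)
      rw [hz0] at h1
      linarith
    refine ⟨insert u S, by rw [Finset.card_insert_of_notMem huS, hcard], hconn',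
      fun y hy => ⟨fun j hj => ?_, ?_⟩⟩
    · rcases Nat.lt_or_ge k j with h | h
      · obtain rfl : j = k + 1 := by omega
        exact hnew y hy
      · exact (hS y hy).1 j h
    · have h1 := step y hy (hnew y hy).le
      have h2 := mul_le_mul_of_nonneg_left (hS y hy).2 (hnew y hy).le
      exact le_of_mul_le_mul_right (h1.trans h2) ((hS y hy).1 k le_rfl)

lemma conn_univ {V : Type*} [Fintype V] (G : SimpleGraph V) (h : G.Connected) :
    Conn G Finset.univ := by
  intro C hC hne
  obtain ⟨c, hc⟩ := hne
  refine Finset.eq_univ_of_forall fun w => ?_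
  obtain ⟨p⟩ := h.preconnected c w
  induction p with
  | nil => exact hc
  | cons hadj _ ih =>
    refine ih ?_
    by_contra hn
    exact hC.2 _ hc _ (Finset.mem_univ _) hn hadj

/-! ### Spanning subgraphs and complete bipartite graphs -/

/-- For a spanning subgraph `H` of `G` and `T ⊆ S`, one has `I_G(S) / I_G(T) ≤ I_H(S) / I_H(T)`
wherever all induced subgraphs of `G` have positive polynomial. -/
lemma ind_sub {V : Type*} (H G : SimpleGraph V) (hHG : H ≤ G) (x : ℝ) (hx : x ≤ 0)
    (hpos : ∀ S : Finset V, 0 < ind G S x) (S : Finset V) :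
    0 < ind H S x ∧ ∀ T ⊆ S, ind G S x * ind H T x ≤ ind H S x * ind G T x := by
  classical
  induction S using Finset.strongInduction with
  | H S ih =>
    have step : ∀ v ∈ S, ind G S x * ind H (S.erase v) x ≤ ind H S x * ind G (S.erase v) x := by
      intro v hv
      have hss := Finset.erase_ssubset hv
      have hnv := Finset.notMem_erase v S
      have e1 := ind_insert G _ v hnv x
      have e2 := ind_insert H _ v hnv x
      rw [Finset.insert_erase hv] at e1 e2
      have h1 := (ih _ hss).2 _ (Finset.filter_subset (fun w => ¬ G.Adj v w) (S.erase v))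
      have hsub : ((S.erase v).filter fun w => ¬ G.Adj v w) ⊆
          (S.erase v).filter fun w => ¬ H.Adj v w := fun w hw => by
        rw [Finset.mem_filter] at hw ⊢
        exact ⟨hw.1, fun h => hw.2 (hHG h)⟩
      have h2 := ind_anti H x hx _ _ (fun R hR => (ih R (hR.trans_subset
        ((Finset.filter_subset _ _).trans hss.subset))).1.le) hsub
      have h3 := mul_le_mul_of_nonneg_left h2 (hpos (S.erase v)).le
      have h4 := mul_le_mul_of_nonpos_left (h3.trans h1) hx
      rw [e1, e2]
      linarith
    have hS : 0 < ind H S x := by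
      rcases S.eq_empty_or_nonempty with rfl | ⟨v, hv⟩
      · simp [ind_empty]
      have h1 := step v hv
      have h2 := mul_pos (hpos S) (ih _ (Finset.erase_ssubset hv)).1
      exact pos_of_mul_pos_left (h2.trans_le h1) (hpos _).le
    refine ⟨hS, fun T hT => ?_⟩
    by_cases hEq : T = S
    · rw [hEq, mul_comm]
    obtain ⟨v, hv, hvT⟩ := Finset.exists_of_ssubset (hT.ssubset_of_ne hEq)
    have h1 := step v hv
    obtain ⟨p1, h2⟩ := ih _ (Finset.erase_ssubset hv)
    have h3 := h2 T fun a ha => Finset.mem_erase.2 ⟨fun h => hvT (h ▸ ha), hT ha⟩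
    have pT : 0 < ind H T x := (ih T (hT.ssubset_of_ne hEq)).1
    have h4 := mul_le_mul_of_nonneg_right h1 (hpos T).le
    have h5 := mul_le_mul_of_nonneg_left h3 (hpos S).le
    refine le_of_mul_le_mul_right ?_ (hpos (S.erase v))
    linarith

/-- `I(K_{a,b}, x) = (1 + x)^a + (1 + x)^b - 1`, for the complete bipartite graph with parts
`A` and `B`. -/
lemma ind_bip {V : Type*} [Fintype V] (K : SimpleGraph V) (A B : Finset V)
    (hB : ∀ v, v ∈ B ↔ v ∉ A) (hK : ∀ u v, K.Adj u v ↔ ¬ (u ∈ A ↔ v ∈ A)) (x : ℝ) :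
    ind K Finset.univ x = (1 + x) ^ A.card + (1 + x) ^ B.card - 1 := by
  classical
  have hsum : ∀ A : Finset V, (∑ s ∈ (Finset.univ : Finset V).powerset,
      if s ⊆ A then x ^ s.card else 0) = (1 + x) ^ A.card := by
    intro A
    have h := Finset.sum_pow_mul_eq_add_pow x 1 A
    rw [add_comm 1 x, ← h, ← Finset.sum_filter]
    refine Finset.sum_congr ?_ fun s _ => by simp
    ext s
    simp
  have hone : (∑ s ∈ (Finset.univ : Finset V).powerset,
      if s = ∅ then (1 : ℝ) else 0) = 1 := by simp
  rw [← hsum, ← hsum, ← hone, ← Finset.sum_add_distrib, ← Finset.sum_sub_distrib]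
  unfold ind
  refine Finset.sum_congr rfl fun s _ => ?_
  have hiff : IsIndepFinset K s ↔ s ⊆ A ∨ s ⊆ B := by
    constructor
    · intro h
      by_contra hcon
      push Not at hcon
      obtain ⟨u, hu, hu'⟩ := Finset.not_subset.1 hcon.1
      obtain ⟨v, hv, hv'⟩ := Finset.not_subset.1 hcon.2
      rw [hB, not_not] at hv'
      exact h u hu v hv ((hK u v).2 (by tauto))
    · rintro (h | h) u hu v hv hadj
      · have h1 := h hu
        have h2 := h hv
        exact (hK u v).1 hadj (by tauto)
      · have h1 := (hB u).1 (h hu)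
        have h2 := (hB v).1 (h hv)
        exact (hK u v).1 hadj (by tauto)
  rcases s.eq_empty_or_nonempty with rfl | ⟨w, hw⟩
  · simp [IsIndepFinset]
  have hne : s ≠ ∅ := Finset.ne_empty_of_mem hw
  by_cases h1 : s ⊆ A <;> by_cases h2 : s ⊆ B
  · exact absurd (h1 hw) ((hB w).1 (h2 hw))
  all_goals simp [hiff, h1, h2, hne]

lemma ind_completeBipartite (a b : ℕ) (x : ℝ) :
    ind (completeBipartiteGraph (Fin a) (Fin b)) Finset.univ x =
      (1 + x) ^ a + (1 + x) ^ b - 1 := by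
  rw [ind_bip _ (Finset.univ.map Function.Embedding.inl) (Finset.univ.map Function.Embedding.inr)]
  · simp
  · intro v
    cases v <;> simp
  · intro u v
    cases u <;> cases v <;> simp

/-- For `t ∈ [0, 1]` and a fixed sum of exponents, the more balanced pair of exponents `(c, d)`
gives the smaller value. -/
lemma pow_balanced (t : ℝ) (h0 : 0 ≤ t) (h1 : t ≤ 1) (a b c d : ℕ) (hsum : a + b = c + d)
    (hac : a ≤ c) (hcd : a ≤ d) : t ^ c + t ^ d ≤ t ^ a + t ^ b := by
  obtain ⟨k, rfl⟩ := Nat.exists_eq_add_of_le hac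
  obtain ⟨l, rfl⟩ := Nat.exists_eq_add_of_le hcd
  obtain rfl : b = a + k + l := by omega
  -- the difference is `t^a (1 - t^k) (1 - t^l)`
  have hk : 0 ≤ 1 - t ^ k := sub_nonneg.2 (pow_le_one₀ h0 h1)
  have hl : 0 ≤ 1 - t ^ l := sub_nonneg.2 (pow_le_one₀ h0 h1)
  have := mul_nonneg (pow_nonneg h0 a) (mul_nonneg hk hl)
  simp only [pow_add]
  linarith

/-- If `G` is a connected bipartite graph of order `n ≥ 1`, then
`P_n ⪯ G` and `G ⪯ K_{⌈n/2⌉,⌊n/2⌋}`. -/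
theorem stmt18 {V : Type*} [Fintype V] (n : ℕ) (hn : 1 ≤ n) (G : SimpleGraph V)
    (hcard : Fintype.card V = n) (hconn : G.Connected) (hbip : G.Colorable 2) :
    Pre (pathGraph n) G ∧
    Pre G (completeBipartiteGraph (Fin ((n + 1) / 2)) (Fin (n / 2))) := by
  classical
  constructor
  · refine pre_of_pos _ _ fun x hx h => ?_
    have hpos := ind_pos_of_univ G x h
    obtain ⟨S, hS, -, hle⟩ := grow G (conn_univ G hconn) x hpos n hcard.ge
    have hSu : S = Finset.univ := by
      rw [← Finset.card_eq_iff_eq_univ, hS, hcard]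
    rw [ind_path, ← hSu]
    exact (hle x ⟨le_rfl, hx⟩).2
  · refine pre_of_pos _ _ fun x hx h => ?_
    simp only [ind_completeBipartite] at h ⊢
    obtain ⟨col⟩ := hbip
    -- the complete bipartite graph on the two colour classes
    let K : SimpleGraph V :=
      { Adj := fun u v => ¬ (col u = 0 ↔ col v = 0)
        symm := ⟨fun u v huv hvu => huv hvu.symm⟩
        loopless := ⟨fun u hu => hu Iff.rfl⟩ }
    have hGK : G ≤ K := by
      intro u v huv
      have hne := col.valid huv
      show ¬ (col u = 0 ↔ col v = 0)
      intro hiff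
      apply hne
      omega
    have hKval := ind_bip K (Finset.univ.filter fun v => col v = 0)
      (Finset.univ.filter fun v => ¬ col v = 0) (by simp) (by simp [K])
    have hab := Finset.card_filter_add_card_filter_not (s := (Finset.univ : Finset V))
      (fun v => col v = 0)
    rw [Finset.card_univ, hcard] at hab
    generalize (Finset.univ.filter fun v => col v = 0).card = a at hKval hab
    generalize (Finset.univ.filter fun v => ¬ col v = 0).card = b at hKval hab
    -- at `-1` the balanced polynomial is nonpositive
    have hx1 : -1 < x := by
      by_contra hcon
      push Not at hcon
      have h1 := h (-1) ⟨hcon, by norm_num⟩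
      rw [add_neg_cancel, zero_pow (by omega)] at h1
      have h2 : (0 : ℝ) ^ (n / 2) ≤ 1 := pow_le_one₀ le_rfl zero_le_one
      linarith
    have hcmp : ∀ y ∈ Set.Icc x 0,
        (1 + y) ^ ((n + 1) / 2) + (1 + y) ^ (n / 2) - 1 ≤ ind K Finset.univ y := by
      intro y hy
      rw [hKval]
      have ht0 : 0 ≤ 1 + y := by linarith [hy.1]
      have ht1 : 1 + y ≤ 1 := by linarith [hy.2]
      rcases le_total a b with hle | hle
      · have := pow_balanced (1 + y) ht0 ht1 a b ((n + 1) / 2) (n / 2) (by omega) (by omega)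
          (by omega)
        linarith
      · have := pow_balanced (1 + y) ht0 ht1 b a ((n + 1) / 2) (n / 2) (by omega) (by omega)
          (by omega)
        linarith
    have hKpos := ind_pos_of_univ K x fun y hy => (h y hy).trans_le (hcmp y hy)
    have hxI : x ∈ Set.Icc x 0 := ⟨le_rfl, hx⟩
    have h2 := (ind_sub G K hGK x hx (hKpos x hxI) Finset.univ).2 ∅ (Finset.empty_subset _)
    rw [ind_empty, ind_empty, mul_one, mul_one] at h2
    exact (hcmp x hxI).trans h2
end
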